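/- arXiv:1710.01849 — 3 statements merged into one kernel-verified Lean document; each statement's English description precedes it below -/
import Mathlib

section
/- For every (τ, I, φ, t), the map τ ↦ 𝓜̃(τ, I, φ, t) is differentiable, and each partial derivative equals the corresponding component of the Melnikov vector: ∂𝓜̃/∂τᵢ (τ, I, φ, t) = ∫_{−∞}^{∞} [P_i, h](p⁰(τ+σ1̄), q⁰(τ+σ1̄), I, φ+σω(I), t+σ) dσ, the integral on the right being absolutely convergent (note that [P_i, h] vanishes when the pendulum coordinates are (0,0), since ∇P_i(0,0) = 0). -/
/-!
The statement is differentiation under the integral sign. For fixed `σ` the chain rule and the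
pendulum equations give
`∂/∂τᵢ H(p⁰(τ+σ1̄), q⁰(τ+σ1̄), …) = -s_i V_i′(q_i⁰)·∂H/∂pᵢ + s_i p_i⁰·∂H/∂qᵢ = -[P_i, h]`.
Both factors `V_i′(q_i⁰(s))` and `p_i⁰(s)` decay like `e^{-λ|s|}`: the second by assumption, the
first because `V_i′` is `1`-periodic, Lipschitz, and vanishes at `0`, so that
`|V_i′(x)| ≤ L_V · dist(x, 0)` on the circle (`abs_deriv_le_dist_of_periodic`). As the first
derivatives of `H` in the pendulum variables are bounded, the `τ`-derivative of the integrand is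
dominated, for `τ'` within distance `1` of `τ`, by a multiple of `∑ᵢ e^{-λ|τᵢ+σ|}`, which is
integrable. The integrand itself is integrable by the Lipschitz estimate on `H`.

The analytic core is `hasFDerivAt_integral_shifted_curves`, in which the variables
`(I, φ + σω(I), t + σ)`, not involving `τ`, are replaced by an arbitrary continuous curve `c σ`.
-/

open MeasureTheory

/-- The Melnikov potential, written in lifted coordinates (`H` is the lift of the
perturbation `h`, and `qt0 i` is a lift of the `i`-th pendulum angle). -/
noncomputable def melnikovPotentialLift {n d : ℕ}
    (p0 qt0 : Fin n → ℝ → ℝ)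
    (H : (Fin n → ℝ) × (Fin n → ℝ) × (Fin d → ℝ) × (Fin d → ℝ) × ℝ → ℝ)
    (ω : (Fin d → ℝ) → Fin d → ℝ)
    (τ : Fin n → ℝ) (I : Fin d → ℝ) (φ : Fin d → ℝ) (t : ℝ) : ℝ :=
  -∫ σ : ℝ,
    (H (fun i => p0 i (τ i + σ), fun i => qt0 i (τ i + σ), I,
        (fun j => φ j + σ * ω I j), t + σ)
      - H (0, 0, I, (fun j => φ j + σ * ω I j), t + σ))

lemma integrable_exp_neg_mul_abs_add {lam : ℝ} (hlam : 0 < lam) (a : ℝ) :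
    Integrable (fun σ : ℝ => Real.exp (-lam * |a + σ|)) := by
  have h : Integrable (fun σ : ℝ => Real.exp (-lam * |σ|)) := by
    rw [← integrableOn_univ, ← Set.Iic_union_Ioi (a := (0 : ℝ)), integrableOn_union]
    constructor
    · refine (integrableOn_exp_mul_Iic hlam 0).congr_fun (fun x hx => ?_) measurableSet_Iic
      simp [abs_of_nonpos (Set.mem_Iic.1 hx)]
    · refine (integrableOn_exp_mul_Ioi (neg_lt_zero.2 hlam) 0).congr_fun (fun x hx => ?_)
        measurableSet_Ioi
      simp [abs_of_pos (Set.mem_Ioi.1 hx)]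
  exact h.comp_add_left a

lemma exp_neg_mul_abs_le_of_dist_le_one {lam a b : ℝ} (hlam : 0 < lam) (hab : |a - b| ≤ 1)
    (σ : ℝ) :
    Real.exp (-lam * |a + σ|) ≤ Real.exp lam * Real.exp (-lam * |b + σ|) := by
  rw [← Real.exp_add]
  apply Real.exp_le_exp.2
  have h : |b + σ| ≤ |a + σ| + 1 := by
    have h1 : |b + σ| ≤ |a + σ| + |b - a| := by
      calc |b + σ| = |(a + σ) + (b - a)| := by ring_nf
        _ ≤ _ := abs_add_le _ _
    rw [abs_sub_comm] at hab
    linarith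
  nlinarith

/-- A Lipschitz derivative of a `1`-periodic function vanishes on `ℤ` once it vanishes at `0`, so
it is controlled by the distance to `0` on the circle. -/
lemma abs_deriv_le_dist_of_periodic {V V' : ℝ → ℝ} {LV : ℝ} (hLV : 0 < LV)
    (hV : ∀ x, HasDerivAt V (V' x) x) (hper : Function.Periodic V 1) (h0 : V' 0 = 0)
    (hlip : LipschitzWith (Real.toNNReal LV) V') (x : ℝ) :
    |V' x| ≤ LV * dist (x : AddCircle (1 : ℝ)) 0 := by
  have hper' : Function.Periodic V' 1 := by
    intro y
    have h1 : HasDerivAt (fun z => V (z + 1)) (V' (y + 1)) y := (hV (y + 1)).comp_add_const y 1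
    have h2 : (fun z => V (z + 1)) = V := funext hper
    rw [h2] at h1
    exact h1.unique (hV y)
  have hround : V' (round x : ℝ) = 0 := by
    have h := hper'.int_mul (round x) 0
    rw [mul_one, zero_add] at h
    rw [h, h0]
  have h := hlip.dist_le_mul x (round x)
  rw [Real.dist_eq, hround, sub_zero, Real.dist_eq, Real.coe_toNNReal _ hLV.le] at h
  rw [dist_zero_right]
  exact h.trans_eq (by rw [AddCircle.norm_eq]; simp)

/-- The differential at `τ` of `τ ↦ H (p(τ+σ1̄), q(τ+σ1̄), c σ)`, where `p'`, `q'` are the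
derivatives of the curves `p`, `q`. -/
noncomputable def shiftedCurvesFDeriv {n : ℕ} {E : Type*} [NormedAddCommGroup E]
    [NormedSpace ℝ E] (p q p' q' : Fin n → ℝ → ℝ) (H : (Fin n → ℝ) × (Fin n → ℝ) × E → ℝ)
    (c : ℝ → E) (τ : Fin n → ℝ) (σ : ℝ) : (Fin n → ℝ) →L[ℝ] ℝ :=
  ∑ i, (p' i (τ i + σ) * fderiv ℝ H (fun k => p k (τ k + σ), fun k => q k (τ k + σ), c σ)
        ((Pi.single i 1 : Fin n → ℝ), 0, 0)
      + q' i (τ i + σ) * fderiv ℝ H (fun k => p k (τ k + σ), fun k => q k (τ k + σ), c σ)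
        (0, (Pi.single i 1 : Fin n → ℝ), 0)) •
    (ContinuousLinearMap.proj i : (Fin n → ℝ) →L[ℝ] ℝ)

lemma hasFDerivAt_shiftedCurves {n : ℕ} {E : Type*} [NormedAddCommGroup E]
    [NormedSpace ℝ E] {p q p' q' : Fin n → ℝ → ℝ} {H : (Fin n → ℝ) × (Fin n → ℝ) × E → ℝ}
    (hp : ∀ i s, HasDerivAt (p i) (p' i s) s) (hq : ∀ i s, HasDerivAt (q i) (q' i s) s)
    (hH : Differentiable ℝ H) (c : ℝ → E) (τ : Fin n → ℝ) (σ : ℝ) :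
    HasFDerivAt (fun τ : Fin n → ℝ => H (fun k => p k (τ k + σ), fun k => q k (τ k + σ), c σ))
      (shiftedCurvesFDeriv p q p' q' H c τ σ) τ := by
  have hcoord : ∀ {f f' : Fin n → ℝ → ℝ}, (∀ i s, HasDerivAt (f i) (f' i s) s) →
      HasFDerivAt (fun τ : Fin n → ℝ => fun k => f k (τ k + σ))
        (ContinuousLinearMap.pi fun k => f' k (τ k + σ) •
          (ContinuousLinearMap.proj k : (Fin n → ℝ) →L[ℝ] ℝ)) τ := by
    intro f f' hf
    rw [hasFDerivAt_pi]
    intro k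
    exact (hf k (τ k + σ)).comp_hasFDerivAt τ ((hasFDerivAt_apply k τ).add_const σ)
  have hγ := (hcoord hp).prodMk ((hcoord hq).prodMk (hasFDerivAt_const (c σ) τ))
  have h := (hH (fun k => p k (τ k + σ), fun k => q k (τ k + σ), c σ)).hasFDerivAt.comp τ hγ
  refine h.congr_fderiv ?_
  ext v
  set D := fderiv ℝ H (fun k => p k (τ k + σ), fun k => q k (τ k + σ), c σ) with hD
  -- Expand the tangent vector of the curve in the standard basis of the pendulum variables.
  have hv : ((fun k => p' k (τ k + σ) * v k, fun k => q' k (τ k + σ) * v k, 0) :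
        (Fin n → ℝ) × (Fin n → ℝ) × E)
      = ∑ i, ((p' i (τ i + σ) * v i) • ((Pi.single i 1 : Fin n → ℝ), (0 : Fin n → ℝ), (0 : E))
        + (q' i (τ i + σ) * v i) • ((0 : Fin n → ℝ), (Pi.single i 1 : Fin n → ℝ), (0 : E))) := by
    refine Prod.ext ?_ (Prod.ext ?_ ?_)
    · ext k
      simp [Prod.fst_sum, Finset.sum_apply, Pi.single_apply]
    · ext k
      simp [Prod.fst_sum, Prod.snd_sum, Finset.sum_apply, Pi.single_apply]
    · simp [Prod.snd_sum]
  have hl : (D.comp ((ContinuousLinearMap.pi fun k => p' k (τ k + σ) •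
          (ContinuousLinearMap.proj k : (Fin n → ℝ) →L[ℝ] ℝ)).prod
        ((ContinuousLinearMap.pi fun k => q' k (τ k + σ) •
          (ContinuousLinearMap.proj k : (Fin n → ℝ) →L[ℝ] ℝ)).prod 0))) v
      = D (fun k => p' k (τ k + σ) * v k, fun k => q' k (τ k + σ) * v k, 0) := rfl
  refine hl.trans ?_
  rw [hv, map_sum]
  simp only [shiftedCurvesFDeriv, ← hD, map_add, map_smul, sum_apply,
    smul_apply, ContinuousLinearMap.proj_apply, smul_eq_mul]
  exact Finset.sum_congr rfl fun i _ => by ring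

lemma norm_shiftedCurvesFDeriv_le {n : ℕ} {E : Type*} [NormedAddCommGroup E]
    [NormedSpace ℝ E] {p q p' q' : Fin n → ℝ → ℝ} {H : (Fin n → ℝ) × (Fin n → ℝ) × E → ℝ}
    {lam B K : ℝ}
    (hp' : ∀ i s, |p' i s| ≤ B * Real.exp (-lam * |s|))
    (hq' : ∀ i s, |q' i s| ≤ B * Real.exp (-lam * |s|))
    (hHp : ∀ x (i : Fin n), |fderiv ℝ H x ((Pi.single i 1 : Fin n → ℝ), 0, 0)| ≤ K)
    (hHq : ∀ x (i : Fin n), |fderiv ℝ H x (0, (Pi.single i 1 : Fin n → ℝ), 0)| ≤ K)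
    (c : ℝ → E) (τ : Fin n → ℝ) (σ : ℝ) :
    ‖shiftedCurvesFDeriv p q p' q' H c τ σ‖
      ≤ ∑ i, 2 * B * K * Real.exp (-lam * |τ i + σ|) := by
  refine (norm_sum_le _ _).trans (Finset.sum_le_sum fun i _ => ?_)
  have hproj : ‖(ContinuousLinearMap.proj i : (Fin n → ℝ) →L[ℝ] ℝ)‖ ≤ 1 :=
    ContinuousLinearMap.opNorm_le_bound _ zero_le_one fun v => by
      simpa using norm_le_pi_norm v i
  rw [norm_smul]
  refine (mul_le_of_le_one_right (norm_nonneg _) hproj).trans ?_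
  rw [Real.norm_eq_abs]
  refine (abs_add_le _ _).trans ?_
  rw [abs_mul, abs_mul]
  have hB : ∀ s, 0 ≤ B * Real.exp (-lam * |s|) := fun s => (abs_nonneg _).trans (hp' i s)
  have h1 := mul_le_mul (hp' i (τ i + σ))
    (hHp (fun k => p k (τ k + σ), fun k => q k (τ k + σ), c σ) i) (abs_nonneg _) (hB _)
  have h2 := mul_le_mul (hq' i (τ i + σ))
    (hHq (fun k => p k (τ k + σ), fun k => q k (τ k + σ), c σ) i) (abs_nonneg _) (hB _)
  linarith

lemma continuous_shiftedCurvesFDeriv {n : ℕ} {E : Type*} [NormedAddCommGroup E]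
    [NormedSpace ℝ E] {p q p' q' : Fin n → ℝ → ℝ} {H : (Fin n → ℝ) × (Fin n → ℝ) × E → ℝ}
    (hp : ∀ i, Continuous (p i)) (hq : ∀ i, Continuous (q i))
    (hp' : ∀ i, Continuous (p' i)) (hq' : ∀ i, Continuous (q' i))
    (hH : ContDiff ℝ 1 H) {c : ℝ → E} (hc : Continuous c) (τ : Fin n → ℝ) :
    Continuous (shiftedCurvesFDeriv p q p' q' H c τ) := by
  have hD : Continuous (fun σ => fderiv ℝ H
      (fun k => p k (τ k + σ), fun k => q k (τ k + σ), c σ)) :=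
    (hH.continuous_fderiv one_ne_zero).comp (by fun_prop)
  unfold shiftedCurvesFDeriv
  fun_prop

/-- Differentiation under the integral sign for `τ ↦ ∫ H(p(τ+σ1̄), q(τ+σ1̄), c σ) - H(0, 0, c σ) dσ`
when the derivatives of the curves and the integrand itself decay exponentially. -/
lemma hasFDerivAt_integral_shifted_curves {n : ℕ} {E : Type*} [NormedAddCommGroup E]
    [NormedSpace ℝ E] {p q p' q' : Fin n → ℝ → ℝ} {H : (Fin n → ℝ) × (Fin n → ℝ) × E → ℝ}
    {lam B B' K : ℝ} (hlam : 0 < lam) (hB : 0 ≤ B) (hK : 0 ≤ K)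
    (hp : ∀ i s, HasDerivAt (p i) (p' i s) s) (hq : ∀ i s, HasDerivAt (q i) (q' i s) s)
    (hpc : ∀ i, Continuous (p' i)) (hqc : ∀ i, Continuous (q' i))
    (hp' : ∀ i s, |p' i s| ≤ B * Real.exp (-lam * |s|))
    (hq' : ∀ i s, |q' i s| ≤ B * Real.exp (-lam * |s|))
    (hH : ContDiff ℝ 1 H)
    (hHp : ∀ x (i : Fin n), |fderiv ℝ H x ((Pi.single i 1 : Fin n → ℝ), 0, 0)| ≤ K)
    (hHq : ∀ x (i : Fin n), |fderiv ℝ H x (0, (Pi.single i 1 : Fin n → ℝ), 0)| ≤ K)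
    {c : ℝ → E} (hc : Continuous c)
    (hdiff : ∀ (τ : Fin n → ℝ) (σ : ℝ),
      |H (fun k => p k (τ k + σ), fun k => q k (τ k + σ), c σ) - H (0, 0, c σ)|
        ≤ ∑ i, B' * Real.exp (-lam * |τ i + σ|))
    (τ : Fin n → ℝ) :
    Integrable (shiftedCurvesFDeriv p q p' q' H c τ) ∧
    HasFDerivAt (fun τ : Fin n → ℝ => ∫ σ : ℝ,
        (H (fun k => p k (τ k + σ), fun k => q k (τ k + σ), c σ) - H (0, 0, c σ)))
      (∫ σ : ℝ, shiftedCurvesFDeriv p q p' q' H c τ σ) τ := by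
  have hpcont : ∀ i, Continuous (p i) := fun i =>
    continuous_iff_continuousAt.2 fun s => (hp i s).continuousAt
  have hqcont : ∀ i, Continuous (q i) := fun i =>
    continuous_iff_continuousAt.2 fun s => (hq i s).continuousAt
  have hHc : Continuous H := hH.continuous
  have hcont : ∀ τ : Fin n → ℝ, Continuous fun σ =>
      H (fun k => p k (τ k + σ), fun k => q k (τ k + σ), c σ) - H (0, 0, c σ) := by
    intro τ
    fun_prop
  have hsum : ∀ A : ℝ, Integrable (fun σ : ℝ => ∑ i, A * Real.exp (-lam * |τ i + σ|)) := fun A =>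
    integrable_finsetSum _ fun i _ => (integrable_exp_neg_mul_abs_add hlam (τ i)).const_mul A
  have hmeas := (continuous_shiftedCurvesFDeriv hpcont hqcont hpc hqc hH hc τ).aestronglyMeasurable
    (μ := volume)
  refine ⟨(hsum (2 * B * K)).mono' hmeas (Filter.Eventually.of_forall fun σ =>
    norm_shiftedCurvesFDeriv_le hp' hq' hHp hHq c τ σ), ?_⟩
  refine hasFDerivAt_integral_of_dominated_of_fderiv_le
    (bound := fun σ => ∑ i, 2 * B * K * Real.exp lam * Real.exp (-lam * |τ i + σ|))
    (F' := shiftedCurvesFDeriv p q p' q' H c)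
    (Metric.closedBall_mem_nhds τ one_pos)
    (Filter.Eventually.of_forall fun τ' => (hcont τ').aestronglyMeasurable)
    ((hsum B').mono' (hcont τ).aestronglyMeasurable (Filter.Eventually.of_forall fun σ =>
      hdiff τ σ))
    hmeas (Filter.Eventually.of_forall fun σ τ' hτ' => ?_) (hsum _)
    (Filter.Eventually.of_forall fun σ τ' _ =>
      (hasFDerivAt_shiftedCurves hp hq (hH.differentiable one_ne_zero) c τ' σ).sub_const _)
  refine (norm_shiftedCurvesFDeriv_le hp' hq' hHp hHq c τ' σ).trans
    (Finset.sum_le_sum fun i _ => ?_)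
  have hi : |τ' i - τ i| ≤ 1 := (dist_le_pi_dist τ' τ i).trans hτ'
  rw [mul_assoc (2 * B * K)]
  exact mul_le_mul_of_nonneg_left (exp_neg_mul_abs_le_of_dist_le_one hlam hi σ) (by positivity)

/-- the Melnikov potential is differentiable in `τ`, and
`∂𝓜̃/∂τᵢ(τ,I,φ,t) = ∫ [P_i,h](p⁰(τ+σ1̄), q⁰(τ+σ1̄), I, φ+σω(I), t+σ) dσ`,
the integral being absolutely convergent. Here
`[P_i,h] = s_i V_i′(q_i)·∂h/∂p_i − s_i p_i·∂h/∂q_i`. -/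
theorem melnikovPotential_hasDerivAt_tau
    {n d : ℕ} (hn : 1 ≤ n) (hd : 1 ≤ d)
    (lam C0 K LV : ℝ) (hlam : 0 < lam) (hC0 : 0 < C0) (hK : 0 < K) (hLV : 0 < LV)
    (V V' : Fin n → ℝ → ℝ)
    (hV : ∀ i x, HasDerivAt (V i) (V' i x) x)
    (hVper : ∀ i, Function.Periodic (V i) 1)
    (hV'0 : ∀ i, V' i 0 = 0)
    (hV'lip : ∀ i, LipschitzWith (Real.toNNReal LV) (V' i))
    (sg : Fin n → ℝ) (hsg : ∀ i, sg i = 1 ∨ sg i = -1)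
    (p0 qt0 : Fin n → ℝ → ℝ)
    (hqode : ∀ i s, HasDerivAt (qt0 i) (sg i * p0 i s) s)
    (hpode : ∀ i s, HasDerivAt (p0 i) (-(sg i * V' i (qt0 i s))) s)
    (hdecay : ∀ i s,
      |p0 i s| + dist ((qt0 i s : ℝ) : AddCircle (1:ℝ)) 0 ≤ C0 * Real.exp (-lam * |s|))
    (H : (Fin n → ℝ) × (Fin n → ℝ) × (Fin d → ℝ) × (Fin d → ℝ) × ℝ → ℝ)
    (hH : ContDiff ℝ 1 H)
    (hHq : ∀ (p q : Fin n → ℝ) (I φ : Fin d → ℝ) (t : ℝ) (i : Fin n),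
      H (p, Function.update q i (q i + 1), I, φ, t) = H (p, q, I, φ, t))
    (hHφ : ∀ (p q : Fin n → ℝ) (I φ : Fin d → ℝ) (t : ℝ) (j : Fin d),
      H (p, q, I, Function.update φ j (φ j + 1), t) = H (p, q, I, φ, t))
    (hHlip : ∀ (p q p' q' : Fin n → ℝ) (I φ : Fin d → ℝ) (t : ℝ),
      |H (p, q, I, φ, t) - H (p', q', I, φ, t)| ≤
        K * ((∑ i, |p i - p' i|) +
          ∑ i, dist ((q i : ℝ) : AddCircle (1:ℝ)) ((q' i : ℝ) : AddCircle (1:ℝ))))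
    (hHpbd : ∀ x (i : Fin n), |fderiv ℝ H x ((Pi.single i 1 : Fin n → ℝ), 0, 0, 0, 0)| ≤ K)
    (hHqbd : ∀ x (i : Fin n), |fderiv ℝ H x (0, (Pi.single i 1 : Fin n → ℝ), 0, 0, 0)| ≤ K)
    (ω : (Fin d → ℝ) → Fin d → ℝ)
    (τ : Fin n → ℝ) (I : Fin d → ℝ) (φ : Fin d → ℝ) (t : ℝ) :
    Differentiable ℝ
      (fun τ' : Fin n → ℝ => melnikovPotentialLift p0 qt0 H ω τ' I φ t) ∧
    ∀ i : Fin n,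
      Integrable (fun σ : ℝ =>
        (sg i * V' i (qt0 i (τ i + σ))) *
            (fderiv ℝ H
              (fun k => p0 k (τ k + σ), fun k => qt0 k (τ k + σ), I,
               (fun j => φ j + σ * ω I j), t + σ)
              ((Pi.single i 1 : Fin n → ℝ), 0, 0, 0, 0))
          - (sg i * p0 i (τ i + σ)) *
            (fderiv ℝ H
              (fun k => p0 k (τ k + σ), fun k => qt0 k (τ k + σ), I,
               (fun j => φ j + σ * ω I j), t + σ)
              (0, (Pi.single i 1 : Fin n → ℝ), 0, 0, 0))) ∧
      HasDerivAt
        (fun s : ℝ =>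
          melnikovPotentialLift p0 qt0 H ω (Function.update τ i s) I φ t)
        (∫ σ : ℝ,
          ((sg i * V' i (qt0 i (τ i + σ))) *
              (fderiv ℝ H
                (fun k => p0 k (τ k + σ), fun k => qt0 k (τ k + σ), I,
                 (fun j => φ j + σ * ω I j), t + σ)
                ((Pi.single i 1 : Fin n → ℝ), 0, 0, 0, 0))
            - (sg i * p0 i (τ i + σ)) *
              (fderiv ℝ H
                (fun k => p0 k (τ k + σ), fun k => qt0 k (τ k + σ), I,
                 (fun j => φ j + σ * ω I j), t + σ)
                (0, (Pi.single i 1 : Fin n → ℝ), 0, 0, 0))))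
        (τ i) := by
  have hsgabs : ∀ i, |sg i| = 1 := fun i => by rcases hsg i with h | h <;> simp [h]
  have hp0 : ∀ i s, |p0 i s| ≤ C0 * Real.exp (-lam * |s|) := fun i s =>
    (le_add_of_nonneg_right dist_nonneg).trans (hdecay i s)
  have hq0 : ∀ i s, dist ((qt0 i s : ℝ) : AddCircle (1 : ℝ)) 0 ≤ C0 * Real.exp (-lam * |s|) :=
    fun i s => (le_add_of_nonneg_left (abs_nonneg _)).trans (hdecay i s)
  have hV'q : ∀ i s, |V' i (qt0 i s)| ≤ LV * C0 * Real.exp (-lam * |s|) := fun i s => by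
    rw [mul_assoc]
    exact (abs_deriv_le_dist_of_periodic hLV (hV i) (hVper i) (hV'0 i) (hV'lip i) _).trans
      (mul_le_mul_of_nonneg_left (hq0 i s) hLV.le)
  have hpcont : ∀ i, Continuous (p0 i) := fun i =>
    continuous_iff_continuousAt.2 fun s => (hpode i s).continuousAt
  have hqcont : ∀ i, Continuous (qt0 i) := fun i =>
    continuous_iff_continuousAt.2 fun s => (hqode i s).continuousAt
  have hV'cont : ∀ i, Continuous (V' i) := fun i => (hV'lip i).continuous
  have hcc : Continuous (fun σ : ℝ =>
      ((I, (fun j => φ j + σ * ω I j), t + σ) : (Fin d → ℝ) × (Fin d → ℝ) × ℝ)) := by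
    fun_prop
  have key := hasFDerivAt_integral_shifted_curves (p := p0) (q := qt0)
    (p' := fun i s => -(sg i * V' i (qt0 i s))) (q' := fun i s => sg i * p0 i s) (H := H)
    (B := (LV + 1) * C0) (B' := K * C0) (K := K)
    (c := fun σ => (I, (fun j => φ j + σ * ω I j), t + σ))
    hlam (by positivity) hK.le hpode hqode (by fun_prop) (by fun_prop)
    (fun i s => by
      rw [abs_neg, abs_mul, hsgabs, one_mul]
      refine (hV'q i s).trans ?_
      gcongr
      linarith)
    (fun i s => by
      rw [abs_mul, hsgabs, one_mul]
      refine (hp0 i s).trans ?_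
      gcongr
      nlinarith)
    hH hHpbd hHqbd hcc
    (fun τ' σ => by
      refine (hHlip _ _ _ _ _ _ _).trans ?_
      rw [← Finset.sum_add_distrib, Finset.mul_sum]
      refine Finset.sum_le_sum fun i _ => ?_
      rw [mul_assoc]
      refine mul_le_mul_of_nonneg_left ?_ hK.le
      simpa using hdecay i (τ' i + σ))
  refine ⟨fun τ' => (key τ').2.neg.differentiableAt, fun i => ?_⟩
  have happly : ∀ σ : ℝ, -(shiftedCurvesFDeriv p0 qt0 (fun i s => -(sg i * V' i (qt0 i s)))
        (fun i s => sg i * p0 i s) H (fun σ => (I, (fun j => φ j + σ * ω I j), t + σ)) τ σ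
        (Pi.single i 1))
      = (sg i * V' i (qt0 i (τ i + σ))) *
            (fderiv ℝ H
              (fun k => p0 k (τ k + σ), fun k => qt0 k (τ k + σ), I,
               (fun j => φ j + σ * ω I j), t + σ)
              ((Pi.single i 1 : Fin n → ℝ), 0, 0, 0, 0))
          - (sg i * p0 i (τ i + σ)) *
            (fderiv ℝ H
              (fun k => p0 k (τ k + σ), fun k => qt0 k (τ k + σ), I,
               (fun j => φ j + σ * ω I j), t + σ)
              (0, (Pi.single i 1 : Fin n → ℝ), 0, 0, 0)) := by
    intro σ
    simp only [shiftedCurvesFDeriv, sum_apply,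
      smul_apply, ContinuousLinearMap.proj_apply, smul_eq_mul,
      Pi.single_apply, mul_ite, mul_one, mul_zero, Finset.sum_ite_eq',
      Finset.mem_univ, if_true]
    simp only [← Prod.zero_eq_mk]
    ring
  obtain ⟨hint, hder⟩ := key τ
  simp only [← happly]
  refine ⟨(hint.apply_continuousLinearMap _).neg, ?_⟩
  rw [integral_neg, ← ContinuousLinearMap.integral_apply hint]
  exact (hder.comp_hasDerivAt_of_eq (τ i) (hasDerivAt_update τ i (τ i))
    (Function.update_eq_self i τ).symm).neg
end

section
/- (Lemma 3.1, made precise.) Fix i ∈ {1,…,n}, I ∈ ℝᵈ, φ ∈ 𝕋ᵈ and t ∈ 𝕋. Assume that the map ς ↦ 𝓜̃ᵢ(ς, I, φ, t) is differentiable, and that the continuous function (θ, u) ↦ 𝓜̃ᵢ(0, I, θ, u) on 𝕋ᵈ × 𝕋 is not constant on the closure of the orbit { (φ − ςω(I), t − ς) : ς ∈ ℝ } ⊆ 𝕋ᵈ × 𝕋. Then 𝓜̃ᵢ has a critical point with respect to ς: the set { ς* ∈ ℝ : (d/dς) 𝓜̃ᵢ(ς*, I, φ, t) = 0 } is nonempty;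 in fact it is unbounded above and unbounded below. -/
/-!
The substitution `σ ↦ σ - ς` in the integral gives `𝓜̃ᵢ(ς, I, φ, t) = F (φ - ςω(I), t - ς)`
(`partialMelnikov_eq_shift`), so the potential is the continuous function `F` read along a linear
flow on the compact group `𝕋ᵈ × 𝕋`. In a compact group the multiples `m • v` return arbitrarily
close to `0`, hence `F (x + m • v)` accumulates at `F x` (`mapClusterPt_add_nsmul`).

If the critical points of `ς ↦ 𝓜̃ᵢ(ς, I, φ, t)` were bounded above, Darboux's theorem would make
this function strictly monotone near `+∞`; being bounded, it would have a limit `L` there, and by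
recurrence each of its values would equal `L`. Then `F` would be constant on the orbit, hence on
its closure. Reversing time gives the statement at `-∞`
(`not_bddAbove_deriv_eq_zero`, applied to the potential and to its reflection).
-/

open MeasureTheory

/-- The `i`-th partial Melnikov potential, in which only the `i`-th pendulum coordinates
are nonzero. -/
noncomputable def partialMelnikov {n d : ℕ} (i : Fin n)
    (p0 : Fin n → ℝ → ℝ) (q0 : Fin n → ℝ → AddCircle (1:ℝ))
    (h : (Fin n → ℝ) → (Fin n → AddCircle (1:ℝ)) → (Fin d → ℝ) →
      (Fin d → AddCircle (1:ℝ)) → ℝ → ℝ)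
    (ω : (Fin d → ℝ) → Fin d → ℝ)
    (ς : ℝ) (I : Fin d → ℝ) (φ : Fin d → AddCircle (1:ℝ)) (t : ℝ) : ℝ :=
  -∫ σ : ℝ,
    (h (Pi.single i (p0 i (ς + σ))) (Pi.single i (q0 i (ς + σ))) I
        (fun j => φ j + ((σ * ω I j : ℝ) : AddCircle (1:ℝ))) (t + σ)
      - h 0 0 I (fun j => φ j + ((σ * ω I j : ℝ) : AddCircle (1:ℝ))) (t + σ))

open Filter Topology

/-- A recurrent function bounded above that is increasing near `+∞` is constant: it equals its limit
at `+∞` everywhere. -/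
lemma exists_eq_const_of_monotoneOn_of_recurrent {g : ℝ → ℝ} {b : ℝ}
    (hmono : MonotoneOn g (Set.Ioi b)) (hbdd : BddAbove (Set.range g))
    (hrec : ∀ s, MapClusterPt (g s) atTop fun m : ℕ => g (s + m)) :
    ∃ c, ∀ s, g s = c := by
  -- Freezing `g` to the left of `b + 1` makes it monotone on the whole line.
  have hm : Monotone fun x => g (max (b + 1) x) := by
    intro x y hxy
    exact hmono (lt_of_lt_of_le (lt_add_one b) (le_max_left _ _))
      (lt_of_lt_of_le (lt_add_one b) (le_max_left _ _)) (max_le_max_left _ hxy)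
  have hb : BddAbove (Set.range fun x => g (max (b + 1) x)) :=
    hbdd.mono (Set.range_subset_iff.2 fun x => Set.mem_range_self (max (b + 1) x))
  have hlim : Tendsto g atTop (𝓝 (⨆ x, g (max (b + 1) x))) := by
    refine (tendsto_atTop_ciSup hm hb).congr' ?_
    filter_upwards [eventually_ge_atTop (b + 1)] with x hx
    rw [max_eq_right hx]
  refine ⟨⨆ x, g (max (b + 1) x), fun s => ?_⟩
  have hs : Tendsto (fun m : ℕ => g (s + m)) atTop (𝓝 (⨆ x, g (max (b + 1) x))) :=
    hlim.comp (tendsto_atTop_add_const_left _ s tendsto_natCast_atTop_atTop)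
  have hne : (𝓝 (g s) ⊓ 𝓝 (⨆ x, g (max (b + 1) x))).NeBot :=
    (hrec s).clusterPt.mono hs
  exact eq_of_nhds_neBot hne

lemma not_bddAbove_deriv_eq_zero {g : ℝ → ℝ} (hg : Differentiable ℝ g)
    (hA : BddAbove (Set.range g)) (hB : BddBelow (Set.range g))
    (hrec : ∀ s, MapClusterPt (g s) atTop fun m : ℕ => g (s + m))
    (hnc : ¬ ∃ c, ∀ s, g s = c) :
    ¬ BddAbove {s | deriv g s = 0} := by
  rintro ⟨b, hb⟩
  have hne : ∀ x ∈ Set.Ioi b, deriv g x ≠ 0 := fun x hx h0 => absurd (hb h0) (not_le.2 hx)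
  rcases hasDerivWithinAt_forall_lt_or_forall_gt_of_forall_ne (convex_Ioi b)
    (fun x _ => (hg x).hasDerivAt.hasDerivWithinAt) hne with hneg | hpos
  · have hanti : StrictAntiOn g (Set.Ioi b) :=
      strictAntiOn_of_deriv_neg (convex_Ioi b) hg.continuous.continuousOn
        (by simpa [interior_Ioi] using hneg)
    obtain ⟨c, hc⟩ := exists_eq_const_of_monotoneOn_of_recurrent (g := fun s => -g s) (b := b)
      (fun x hx y hy hxy => neg_le_neg (hanti.antitoneOn hx hy hxy))
      (by
        obtain ⟨l, hl⟩ := hB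
        refine ⟨-l, ?_⟩
        rintro _ ⟨x, rfl⟩
        exact neg_le_neg (hl ⟨x, rfl⟩))
      (fun s => (hrec s).continuousAt_comp continuous_neg.continuousAt)
    exact hnc ⟨-c, fun s => by rw [← hc s, neg_neg]⟩
  · have hmono : StrictMonoOn g (Set.Ioi b) :=
      strictMonoOn_of_deriv_pos (convex_Ioi b) hg.continuous.continuousOn
        (by simpa [interior_Ioi] using hpos)
    exact hnc (exists_eq_const_of_monotoneOn_of_recurrent hmono.monotoneOn hA hrec)

/-- Poincaré recurrence for translations of a compact group, seen through a continuous
function. -/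
lemma mapClusterPt_add_nsmul {G : Type*} [AddCommGroup G] [TopologicalSpace G]
    [IsTopologicalAddGroup G] [CompactSpace G] {F : G → ℝ} (hF : Continuous F) (x v : G) :
    MapClusterPt (F x) atTop fun m : ℕ => F (x + m • v) := by
  have h0 := mapClusterPt_zero_atTop_nsmul v
  have hc : Continuous fun y => F (x + y) := by fun_prop
  simpa [Function.comp_def] using h0.continuousAt_comp (f := fun y => F (x + y)) hc.continuousAt

/-- Shifting the homoclinic orbit by `ς` is the same as flowing the angles and the time
backwards by `ς`. -/
lemma partialMelnikov_eq_shift {n d : ℕ} (i : Fin n)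
    (p0 : Fin n → ℝ → ℝ) (q0 : Fin n → ℝ → AddCircle (1:ℝ))
    (h : (Fin n → ℝ) → (Fin n → AddCircle (1:ℝ)) → (Fin d → ℝ) →
      (Fin d → AddCircle (1:ℝ)) → ℝ → ℝ)
    (ω : (Fin d → ℝ) → Fin d → ℝ)
    (ς : ℝ) (I : Fin d → ℝ) (φ : Fin d → AddCircle (1:ℝ)) (t : ℝ) :
    partialMelnikov i p0 q0 h ω ς I φ t =
      partialMelnikov i p0 q0 h ω 0 I
        (fun j => φ j - ((ς * ω I j : ℝ) : AddCircle (1:ℝ))) (t - ς) := by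
  unfold partialMelnikov
  congr 1
  rw [← integral_add_left_eq_self (μ := volume) (fun σ : ℝ =>
    (h (Pi.single i (p0 i (0 + σ))) (Pi.single i (q0 i (0 + σ))) I
        (fun j => φ j - ((ς * ω I j : ℝ) : AddCircle (1:ℝ))
          + ((σ * ω I j : ℝ) : AddCircle (1:ℝ))) (t - ς + σ)
      - h 0 0 I (fun j => φ j - ((ς * ω I j : ℝ) : AddCircle (1:ℝ))
          + ((σ * ω I j : ℝ) : AddCircle (1:ℝ))) (t - ς + σ))) ς]
  refine integral_congr_ae (Eventually.of_forall fun σ => ?_)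
  have hθ : (fun j => φ j - ((ς * ω I j : ℝ) : AddCircle (1:ℝ))
      + (((ς + σ) * ω I j : ℝ) : AddCircle (1:ℝ))) =
      fun j => φ j + ((σ * ω I j : ℝ) : AddCircle (1:ℝ)) := by
    funext j
    rw [add_mul, AddCircle.coe_add]
    abel
  have ht : t - ς + (ς + σ) = t + σ := by ring
  simp only [hθ, ht, zero_add]

/-- Lemma 3.1, made precise: if the partial Melnikov potential, regarded
through its descent `F` to `𝕋ᵈ × 𝕋`, is not constant on the closure of the orbit
`{(φ − ςω(I), t − ς)}`, then `ς ↦ 𝓜̃ᵢ(ς, I, φ, t)` has critical points, and the set of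
critical points is unbounded above and below. -/
theorem partialMelnikov_has_critical_points
    {n d : ℕ} (hn : 1 ≤ n) (hd : 1 ≤ d)
    (lam C0 K : ℝ) (hlam : 0 < lam) (hC0 : 0 < C0) (hK : 0 < K)
    (p0 : Fin n → ℝ → ℝ) (q0 : Fin n → ℝ → AddCircle (1:ℝ))
    (hp0 : ∀ i, Continuous (p0 i)) (hq0 : ∀ i, Continuous (q0 i))
    (hdecay : ∀ i s, |p0 i s| + dist (q0 i s) 0 ≤ C0 * Real.exp (-lam * |s|))
    (h : (Fin n → ℝ) → (Fin n → AddCircle (1:ℝ)) → (Fin d → ℝ) →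
      (Fin d → AddCircle (1:ℝ)) → ℝ → ℝ)
    (hcont : Continuous fun x : (Fin n → ℝ) × (Fin n → AddCircle (1:ℝ)) × (Fin d → ℝ) ×
        (Fin d → AddCircle (1:ℝ)) × ℝ => h x.1 x.2.1 x.2.2.1 x.2.2.2.1 x.2.2.2.2)
    (hLip : ∀ p q p' q' I φ t, |h p q I φ t - h p' q' I φ t| ≤
      K * ((∑ i, |p i - p' i|) + ∑ i, dist (q i) (q' i)))
    (htper : ∀ p q I φ t, h p q I φ (t + 1) = h p q I φ t)
    (ω : (Fin d → ℝ) → Fin d → ℝ)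
    (i : Fin n) (I : Fin d → ℝ) (φ : Fin d → AddCircle (1:ℝ)) (t : ℝ)
    (hdiff : Differentiable ℝ (fun ς => partialMelnikov i p0 q0 h ω ς I φ t))
    -- `F` is the (continuous) descent of `(θ, u) ↦ 𝓜̃ᵢ(0, I, θ, u)` to `𝕋ᵈ × 𝕋`:
    (F : (Fin d → AddCircle (1:ℝ)) × AddCircle (1:ℝ) → ℝ)
    (hFcont : Continuous F)
    (hF : ∀ (θ : Fin d → AddCircle (1:ℝ)) (u : ℝ),
      F (θ, (u : AddCircle (1:ℝ))) = partialMelnikov i p0 q0 h ω 0 I θ u)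
    -- `F` is not constant on the closure of the orbit `{(φ − ςω(I), t − ς) : ς ∈ ℝ}`:
    (hnc : ¬ ∃ c : ℝ, ∀ x ∈ closure (Set.range fun ς : ℝ =>
        ((fun j => φ j - ((ς * ω I j : ℝ) : AddCircle (1:ℝ))),
          ((t - ς : ℝ) : AddCircle (1:ℝ)))), F x = c) :
    {ς : ℝ | deriv (fun ς' => partialMelnikov i p0 q0 h ω ς' I φ t) ς = 0}.Nonempty ∧
    ¬ BddAbove {ς : ℝ | deriv (fun ς' => partialMelnikov i p0 q0 h ω ς' I φ t) ς = 0} ∧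
    ¬ BddBelow {ς : ℝ | deriv (fun ς' => partialMelnikov i p0 q0 h ω ς' I φ t) ς = 0} := by
  set γ : ℝ → (Fin d → AddCircle (1:ℝ)) × AddCircle (1:ℝ) := fun ς =>
    ((fun j => φ j - ((ς * ω I j : ℝ) : AddCircle (1:ℝ))),
      ((t - ς : ℝ) : AddCircle (1:ℝ))) with hγ
  set g : ℝ → ℝ := fun ς => partialMelnikov i p0 q0 h ω ς I φ t with hg
  have hgF : ∀ s, g s = F (γ s) := fun s => by
    simp only [hg, hγ]
    rw [partialMelnikov_eq_shift, hF]
  -- `v` is the displacement of the orbit during one unit of backward time.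
  let v : (Fin d → AddCircle (1:ℝ)) × AddCircle (1:ℝ) :=
    ((fun j => -((ω I j : ℝ) : AddCircle (1:ℝ))), ((-1 : ℝ) : AddCircle (1:ℝ)))
  have hshift : ∀ (s : ℝ) (m : ℕ), γ (s + m) = γ s + m • v := by
    intro s m
    refine Prod.ext (funext fun j => ?_) ?_
    · simp only [hγ, v, Prod.fst_add, Prod.smul_fst, Pi.add_apply, Pi.smul_apply]
      rw [smul_neg, ← AddCircle.coe_nsmul, nsmul_eq_mul, add_mul, AddCircle.coe_add]
      abel
    · simp only [hγ, v, Prod.snd_add, Prod.smul_snd]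
      rw [← AddCircle.coe_nsmul, nsmul_eq_mul, ← AddCircle.coe_add]
      congr 1
      ring
  have hfwd : ∀ s, MapClusterPt (g s) atTop fun m : ℕ => g (s + m) := by
    intro s
    simp only [hgF, hshift]
    exact mapClusterPt_add_nsmul hFcont (γ s) v
  have hbwd : ∀ s, MapClusterPt (g (-s)) atTop fun m : ℕ => g (-(s + m)) := by
    intro s
    have hback : ∀ m : ℕ, γ (-(s + m)) = γ (-s) + m • (-v) := by
      intro m
      have := hshift (-(s + m)) m
      rw [show -(s + (m : ℝ)) + m = -s by ring] at this
      rw [this, smul_neg, add_neg_cancel_right]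
    simp only [hgF, hback]
    exact mapClusterPt_add_nsmul hFcont (γ (-s)) (-v)
  have hsub : Set.range g ⊆ Set.range F := by
    rintro _ ⟨s, rfl⟩
    exact ⟨γ s, (hgF s).symm⟩
  have hA : BddAbove (Set.range g) := (isCompact_range hFcont).bddAbove.mono hsub
  have hB : BddBelow (Set.range g) := (isCompact_range hFcont).bddBelow.mono hsub
  have hgnc : ¬ ∃ c, ∀ s, g s = c := by
    rintro ⟨c, hc⟩
    refine hnc ⟨c, fun x hx => ?_⟩
    have hcl : IsClosed {x | F x = c} := isClosed_eq hFcont continuous_const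
    refine closure_minimal ?_ hcl hx
    rintro _ ⟨s, rfl⟩
    exact (hgF s).symm.trans (hc s)
  have hup := not_bddAbove_deriv_eq_zero hdiff hA hB hfwd hgnc
  have hrange : Set.range (fun s => g (-s)) ⊆ Set.range g := by
    rintro _ ⟨s, rfl⟩
    exact ⟨-s, rfl⟩
  have hdown := not_bddAbove_deriv_eq_zero (g := fun s => g (-s)) (hdiff.comp differentiable_neg)
    (hA.mono hrange) (hB.mono hrange) hbwd
    (fun ⟨c, hc⟩ => hgnc ⟨c, fun s => by simpa using hc (-s)⟩)
  refine ⟨?_, hup, fun ⟨b, hb⟩ => hdown ⟨-b, fun s hs => ?_⟩⟩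
  · by_contra hempty
    rw [Set.not_nonempty_iff_eq_empty] at hempty
    exact hup (hempty ▸ bddAbove_empty)
  · rw [Set.mem_ofPred_eq, deriv_comp_neg, neg_eq_zero] at hs
    linarith [hb hs]
end

section
/- (Lemma 3.2.) For every υ > 0 there exists ΔT > 0 such that for every τ = (τ₁,…,τ_n) ∈ ℝⁿ with τ_{i+1} − τ_i > ΔT for all i = 1,…,n−1, and every (I, φ, t) ∈ ℝᵈ × 𝕋ᵈ × ℝ, one has |𝓜̃(τ₁,…,τ_n, I, φ, t) − ( 𝓜̃₁(τ₁, I, φ, t) + ⋯ + 𝓜̃_n(τ_n, I, φ, t) )| < υ; i.e. when the phases of the penduli are widely separated, the Melnikov potential is approximately the sum of the partial Melnikov potentials of the individual penduli. -/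
/-!
At each time `σ`, let `k` be the pendulum whose phase `τ k + σ` is closest to `0`. The separation of
the phases forces `|τ j + σ| ≥ ΔT / 2` for every other `j`, so all penduli except the `k`-th are
within `C₀ e^{-λΔT/4} e^{-(λ/2)|τ j + σ|}` of the origin. By the Lipschitz property the integrand of
the full potential is then close to that of the `k`-th partial one, and the integrands of the other
partial potentials are small (`abs_sub_sum_le_of_close`). The resulting bound on the difference of
the integrands no longer depends on `k`, and integrating it over `σ` gives a constant times
`e^{-λΔT/4}`, uniformly in `τ`, `I`, `φ`, `t`.
-/

open MeasureTheory

/-- The Melnikov potential. -/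
noncomputable def melnikovPotential {n d : ℕ}
    (p0 : Fin n → ℝ → ℝ) (q0 : Fin n → ℝ → AddCircle (1:ℝ))
    (h : (Fin n → ℝ) → (Fin n → AddCircle (1:ℝ)) → (Fin d → ℝ) →
      (Fin d → AddCircle (1:ℝ)) → ℝ → ℝ)
    (ω : (Fin d → ℝ) → Fin d → ℝ)
    (τ : Fin n → ℝ) (I : Fin d → ℝ) (φ : Fin d → AddCircle (1:ℝ)) (t : ℝ) : ℝ :=
  -∫ σ : ℝ,
    (h (fun i => p0 i (τ i + σ)) (fun i => q0 i (τ i + σ)) I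
        (fun j => φ j + ((σ * ω I j : ℝ) : AddCircle (1:ℝ))) (t + σ)
      - h 0 0 I (fun j => φ j + ((σ * ω I j : ℝ) : AddCircle (1:ℝ))) (t + σ))

lemma integrable_exp_neg_mul_abs {c : ℝ} (hc : 0 < c) :
    Integrable (fun s : ℝ => Real.exp (-c * |s|)) := by
  rw [← integrableOn_univ, ← Set.Iic_union_Ioi (a := (0 : ℝ)), integrableOn_union]
  constructor
  · refine (integrableOn_exp_mul_Iic hc 0).congr_fun (fun s hs => ?_) measurableSet_Iic
    simp only [abs_of_nonpos (Set.mem_Iic.1 hs)]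
    ring_nf
  · refine (integrableOn_exp_mul_Ioi (neg_lt_zero.2 hc) 0).congr_fun (fun s hs => ?_)
      measurableSet_Ioi
    simp only [abs_of_pos (Set.mem_Ioi.1 hs)]

lemma separated_of_lt {n : ℕ} {τ : Fin n → ℝ} {D : ℝ} (hD : 0 < D)
    (hτ : ∀ (i : Fin n) (hi : (i : ℕ) + 1 < n), τ ⟨(i : ℕ) + 1, hi⟩ - τ i > D)
    {i j : Fin n} (hij : i < j) : D < τ j - τ i := by
  have key : ∀ (m : ℕ) (hm : (i : ℕ) + 1 + m < n), D < τ ⟨(i : ℕ) + 1 + m, hm⟩ - τ i := by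
    intro m
    induction m with
    | zero => intro hm; exact hτ i hm
    | succ m ih =>
      intro hm
      have h1 := ih (by omega)
      have h2 := hτ ⟨(i : ℕ) + 1 + m, by omega⟩ hm
      have h3 : (⟨(i : ℕ) + 1 + (m + 1), hm⟩ : Fin n) = ⟨(i : ℕ) + 1 + m + 1, hm⟩ := rfl
      rw [h3]
      dsimp only at h2
      linarith
  have hij' : (i : ℕ) < j := hij
  have hj : (⟨(i : ℕ) + 1 + ((j : ℕ) - (i + 1)), by omega⟩ : Fin n) = j := by
    ext; dsimp only; omega
  have := key ((j : ℕ) - (i + 1)) (by omega)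
  rwa [hj] at this

lemma separated_of_ne {n : ℕ} {τ : Fin n → ℝ} {D : ℝ} (hD : 0 < D)
    (hτ : ∀ (i : Fin n) (hi : (i : ℕ) + 1 < n), τ ⟨(i : ℕ) + 1, hi⟩ - τ i > D)
    {i j : Fin n} (hij : i ≠ j) : D < |τ j - τ i| := by
  rcases lt_or_gt_of_ne hij with h | h
  · exact (separated_of_lt hD hτ h).trans_le (le_abs_self _)
  · rw [abs_sub_comm]
    exact (separated_of_lt hD hτ h).trans_le (le_abs_self _)

/-- Pointwise estimate: if every pendulum other than the `k`-th is close to the origin, with errors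
`b j`, then the increment of a Lipschitz function `g` at `(p, q)` is almost the sum of the
increments obtained by switching on one pendulum at a time. -/
lemma abs_sub_sum_le_of_close {n : ℕ} {K : ℝ} (hK : 0 ≤ K)
    (g : (Fin n → ℝ) → (Fin n → AddCircle (1:ℝ)) → ℝ)
    (hg : ∀ p q p' q', |g p q - g p' q'| ≤
      K * ((∑ i, |p i - p' i|) + ∑ i, dist (q i) (q' i)))
    (p : Fin n → ℝ) (q : Fin n → AddCircle (1:ℝ)) (b : Fin n → ℝ) (hb : ∀ j, 0 ≤ b j)
    (k : Fin n) (hk : ∀ j, j ≠ k → |p j| + dist (q j) 0 ≤ b j) :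
    |(g p q - g 0 0) - ∑ i, (g (Pi.single i (p i)) (Pi.single i (q i)) - g 0 0)|
      ≤ 2 * K * ∑ j, b j := by
  have hfull : |g p q - g (Pi.single k (p k)) (Pi.single k (q k))| ≤ K * ∑ j, b j := by
    refine (hg _ _ _ _).trans (mul_le_mul_of_nonneg_left ?_ hK)
    rw [← Finset.sum_add_distrib]
    refine Finset.sum_le_sum fun j _ => ?_
    by_cases hj : j = k
    · subst hj
      simpa using hb j
    · simpa [Pi.single_eq_of_ne hj] using hk j hj
  have hpart : ∀ i, i ≠ k →
      |g (Pi.single i (p i)) (Pi.single i (q i)) - g 0 0| ≤ K * b i := by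
    intro i hi
    refine (hg _ _ _ _).trans (mul_le_mul_of_nonneg_left ?_ hK)
    rw [← Finset.sum_add_distrib, Finset.sum_eq_single i]
    · simpa using hk i hi
    · intro j _ hj
      simp [Pi.single_eq_of_ne hj]
    · simp
  have hrest : |∑ i ∈ Finset.univ.erase k,
      (g (Pi.single i (p i)) (Pi.single i (q i)) - g 0 0)| ≤ K * ∑ j, b j := by
    calc _ ≤ ∑ i ∈ Finset.univ.erase k,
          |g (Pi.single i (p i)) (Pi.single i (q i)) - g 0 0| := Finset.abs_sum_le_sum_abs _ _
      _ ≤ ∑ i ∈ Finset.univ.erase k, K * b i :=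
          Finset.sum_le_sum fun i hi => hpart i (Finset.ne_of_mem_erase hi)
      _ ≤ ∑ i, K * b i := Finset.sum_le_sum_of_subset_of_nonneg (Finset.subset_univ _)
          fun i _ _ => mul_nonneg hK (hb i)
      _ = K * ∑ j, b j := (Finset.mul_sum _ _ _).symm
  rw [← Finset.add_sum_erase _ _ (Finset.mem_univ k)]
  rw [abs_le] at hfull hrest ⊢
  constructor <;> linarith [hfull.1, hfull.2, hrest.1, hrest.2]

/-- Lemma 3.2: when the phases of the penduli are widely separated, the
Melnikov potential is approximately the sum of the partial Melnikov potentials. -/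
theorem melnikovPotential_approx_sum_of_partials
    {n d : ℕ} (hn : 1 ≤ n) (hd : 1 ≤ d)
    (lam C0 K : ℝ) (hlam : 0 < lam) (hC0 : 0 < C0) (hK : 0 < K)
    (p0 : Fin n → ℝ → ℝ) (q0 : Fin n → ℝ → AddCircle (1:ℝ))
    (hp0 : ∀ i, Continuous (p0 i)) (hq0 : ∀ i, Continuous (q0 i))
    (hdecay : ∀ i s, |p0 i s| + dist (q0 i s) 0 ≤ C0 * Real.exp (-lam * |s|))
    (h : (Fin n → ℝ) → (Fin n → AddCircle (1:ℝ)) → (Fin d → ℝ) →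
      (Fin d → AddCircle (1:ℝ)) → ℝ → ℝ)
    (hcont : Continuous fun x : (Fin n → ℝ) × (Fin n → AddCircle (1:ℝ)) × (Fin d → ℝ) ×
        (Fin d → AddCircle (1:ℝ)) × ℝ => h x.1 x.2.1 x.2.2.1 x.2.2.2.1 x.2.2.2.2)
    (hLip : ∀ p q p' q' I φ t, |h p q I φ t - h p' q' I φ t| ≤
      K * ((∑ i, |p i - p' i|) + ∑ i, dist (q i) (q' i)))
    (ω : (Fin d → ℝ) → Fin d → ℝ) :
    ∀ υ > (0:ℝ), ∃ ΔT > (0:ℝ), ∀ τ : Fin n → ℝ,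
      (∀ (i : Fin n) (hi : (i : ℕ) + 1 < n), τ ⟨(i : ℕ) + 1, hi⟩ - τ i > ΔT) →
      ∀ (I : Fin d → ℝ) (φ : Fin d → AddCircle (1:ℝ)) (t : ℝ),
        |melnikovPotential p0 q0 h ω τ I φ t
            - ∑ i : Fin n, partialMelnikov i p0 q0 h ω (τ i) I φ t| < υ := by
  intro υ hυ
  have : Nonempty (Fin n) := ⟨⟨0, hn⟩⟩
  set J : ℝ := ∫ s : ℝ, Real.exp (-(lam / 2) * |s|) with hJ
  -- `ΔT` is chosen so that the final bound `2 K C₀ n J e^{-λΔT/4}` falls below `υ`.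
  obtain ⟨D, hDυ, hD⟩ : ∃ D : ℝ,
      2 * K * (n * (C0 * Real.exp (-(lam / 4) * D) * J)) < υ ∧ 0 < D := by
    have h1 : Filter.Tendsto (fun D : ℝ => Real.exp (-(lam / 4) * D)) Filter.atTop (nhds 0) :=
      Real.tendsto_exp_atBot.comp
        (Filter.tendsto_id.const_mul_atTop_of_neg (by linarith))
    have h2 : Filter.Tendsto
        (fun D : ℝ => 2 * K * (n * (C0 * Real.exp (-(lam / 4) * D) * J)))
        Filter.atTop (nhds (2 * K * (n * (C0 * 0 * J)))) :=
      (((h1.const_mul C0).mul_const J).const_mul (n : ℝ)).const_mul (2 * K)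
    have h3 : 2 * K * (n * (C0 * 0 * J)) < υ := by simpa using hυ
    exact ((h2.eventually_lt_const h3).and (Filter.eventually_gt_atTop 0)).exists
  refine ⟨D, hD, fun τ hτ I φ t => ?_⟩
  set c : ℝ := C0 * Real.exp (-(lam / 4) * D) with hc
  have hc0 : 0 ≤ c := by positivity
  set Φ : ℝ → Fin d → AddCircle (1:ℝ) :=
    fun σ j => φ j + ((σ * ω I j : ℝ) : AddCircle (1:ℝ)) with hΦ
  have hΦc : Continuous Φ := by
    refine continuous_pi fun j => continuous_const.add ?_
    exact (AddCircle.continuous_mk' (1:ℝ)).comp (continuous_id.mul continuous_const)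
  have hhc : ∀ (P : ℝ → Fin n → ℝ) (Q : ℝ → Fin n → AddCircle (1:ℝ)), Continuous P →
      Continuous Q → Continuous fun σ => h (P σ) (Q σ) I (Φ σ) (t + σ) := by
    intro P Q hP hQ
    exact hcont.comp (hP.prodMk (hQ.prodMk (continuous_const.prodMk
      (hΦc.prodMk (continuous_const.add continuous_id)))))
  have hp : ∀ i, Continuous fun σ => p0 i (τ i + σ) := fun i =>
    (hp0 i).comp (continuous_const.add continuous_id)
  have hq : ∀ i, Continuous fun σ => q0 i (τ i + σ) := fun i =>
    (hq0 i).comp (continuous_const.add continuous_id)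
  have hexp : ∀ a : ℝ, 0 < a → ∀ i, Integrable fun σ : ℝ => Real.exp (-a * |τ i + σ|) :=
    fun a ha i => (integrable_exp_neg_mul_abs ha).comp_add_left (τ i)
  let F : ℝ → ℝ := fun σ =>
    h (fun i => p0 i (τ i + σ)) (fun i => q0 i (τ i + σ)) I (Φ σ) (t + σ)
      - h 0 0 I (Φ σ) (t + σ)
  let f : Fin n → ℝ → ℝ := fun i σ =>
    h (Pi.single i (p0 i (τ i + σ))) (Pi.single i (q0 i (τ i + σ))) I (Φ σ) (t + σ)
      - h 0 0 I (Φ σ) (t + σ)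
  have hFint : Integrable F := by
    have hdom : Integrable fun σ : ℝ => K * ∑ i, C0 * Real.exp (-lam * |τ i + σ|) :=
      (integrable_finsetSum _ fun i _ => (hexp lam hlam i).const_mul C0).const_mul K
    refine hdom.mono' ?_ (Filter.Eventually.of_forall fun σ => ?_)
    · exact ((hhc _ _ (continuous_pi hp) (continuous_pi hq)).sub
        (hhc _ _ continuous_const continuous_const)).aestronglyMeasurable
    · refine (hLip _ _ _ _ _ _ _).trans (mul_le_mul_of_nonneg_left ?_ hK.le)
      rw [← Finset.sum_add_distrib]
      exact Finset.sum_le_sum fun i _ => by simpa using hdecay i (τ i + σ)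
  have hfint : ∀ i, Integrable (f i) := by
    intro i
    have hdom : Integrable fun σ : ℝ => K * (C0 * Real.exp (-lam * |τ i + σ|)) :=
      ((hexp lam hlam i).const_mul C0).const_mul K
    refine hdom.mono' ?_ (Filter.Eventually.of_forall fun σ => ?_)
    · exact ((hhc _ _ ((continuous_single i).comp (hp i))
        ((continuous_single i).comp (hq i))).sub
        (hhc _ _ continuous_const continuous_const)).aestronglyMeasurable
    · refine (hLip _ _ _ _ _ _ _).trans (mul_le_mul_of_nonneg_left ?_ hK.le)
      rw [← Finset.sum_add_distrib, Finset.sum_eq_single i]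
      · simpa using hdecay i (τ i + σ)
      · intro j _ hj
        simp [Pi.single_eq_of_ne hj]
      · simp
  have hbound : ∀ σ, |F σ - ∑ i, f i σ| ≤
      2 * K * ∑ i, c * Real.exp (-(lam / 2) * |τ i + σ|) := by
    intro σ
    obtain ⟨k, hk⟩ := Finite.exists_min fun i => |τ i + σ|
    refine abs_sub_sum_le_of_close hK.le (fun p q => h p q I (Φ σ) (t + σ))
      (fun p q p' q' => hLip p q p' q' I (Φ σ) (t + σ))
      (fun i => p0 i (τ i + σ)) (fun i => q0 i (τ i + σ))
      (fun i => c * Real.exp (-(lam / 2) * |τ i + σ|))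
      (fun j => mul_nonneg hc0 (Real.exp_pos _).le) k fun j hj => ?_
    refine (hdecay j (τ j + σ)).trans ?_
    rw [hc, mul_assoc, ← Real.exp_add]
    refine mul_le_mul_of_nonneg_left (Real.exp_le_exp.2 ?_) hC0.le
    have h1 := separated_of_ne hD hτ hj.symm
    have h2 : |τ j - τ k| ≤ |τ j + σ| + |τ k + σ| := by
      have := abs_sub (τ j + σ) (τ k + σ)
      rwa [add_sub_add_right_eq_sub] at this
    have h3 : D / 2 ≤ |τ j + σ| := by linarith [hk j]
    nlinarith
  have hdiff : melnikovPotential p0 q0 h ω τ I φ t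
      - ∑ i : Fin n, partialMelnikov i p0 q0 h ω (τ i) I φ t
      = -∫ σ, (F σ - ∑ i, f i σ) := by
    rw [integral_sub hFint (integrable_finsetSum _ fun i _ => hfint i),
      integral_finsetSum _ fun i _ => hfint i]
    have h1 : melnikovPotential p0 q0 h ω τ I φ t = -∫ σ, F σ := rfl
    have h2 : ∀ i, partialMelnikov i p0 q0 h ω (τ i) I φ t = -∫ σ, f i σ := fun _ => rfl
    simp only [h1, h2, Finset.sum_neg_distrib]
    ring
  rw [hdiff, abs_neg]
  have hterm : ∀ i ∈ Finset.univ,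
      Integrable fun σ : ℝ => c * Real.exp (-(lam / 2) * |τ i + σ|) :=
    fun i _ => (hexp (lam / 2) (by linarith) i).const_mul c
  calc |∫ σ, (F σ - ∑ i, f i σ)|
      ≤ ∫ σ, 2 * K * ∑ i, c * Real.exp (-(lam / 2) * |τ i + σ|) :=
        (Real.norm_eq_abs _).symm.trans_le <| norm_integral_le_of_norm_le
          ((integrable_finsetSum _ hterm).const_mul (2 * K))
          (Filter.Eventually.of_forall hbound)
    _ = 2 * K * (n * (c * J)) := by
        rw [integral_const_mul, integral_finsetSum _ hterm]
        have : ∀ i, ∫ σ : ℝ, c * Real.exp (-(lam / 2) * |τ i + σ|) = c * J := by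
          intro i
          rw [integral_const_mul, hJ]
          congr 1
          exact integral_add_left_eq_self (fun s : ℝ => Real.exp (-(lam / 2) * |s|)) (τ i)
        simp only [this, Finset.sum_const, Finset.card_univ, Fintype.card_fin, nsmul_eq_mul]
    _ < υ := hDυ
end
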